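/- arXiv:math/0512624 — 7 statements merged into one kernel-verified Lean document; each statement's English description precedes it below -/
import Mathlib

section
/- For every natural number n, every real λ with 0 < λ < 1, and every real z ≥ 0, the series (-1)^n · Σ_{k=0}^∞ λ^{n+k} · C(n+k, k) · L_{n+k}(z/λ) converges and equals (1/(1-λ)) · (-λ/(1-λ))^n · L_n(z/(λ(1-λ))) · exp(-z/(1-λ)), where C(n+k,k) is the binomial coefficient. -/
open Filter Topology

/-- The `n`-th Laguerre polynomial, `L n x = ∑_{j=0}^n (-1)^j C(n,j) x^j / j!`. -/
noncomputable def laguerre (n : ℕ) (x : ℝ) : ℝ :=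
  ∑ j ∈ Finset.range (n + 1), (-1 : ℝ) ^ j * (n.choose j) * x ^ j / (j.factorial)

/-!
The generating function `G x t = ∑ₘ Lₘ(x) tᵐ = exp (-x t / (1 - t)) / (1 - t)` satisfies
`G x (s + t) = G x t * G (x / (1 - t)) (s / (1 - t))`. The coefficient of `sⁿ` is
`∑ₖ C(n+k, k) L_{n+k}(x) tᵏ` on the left, by the binomial theorem, and
`G x t * Lₙ(x / (1 - t)) / (1 - t)ⁿ` on the right. Comparing the two at `x = z / λ`, `t = λ` and
multiplying by `(-λ)ⁿ` gives the identity.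
-/

open Finset.HasAntidiagonal (antidiagonal mem_antidiagonal)
open scoped Nat

section PowerSeries

variable {𝕜 : Type*} [NontriviallyNormedField 𝕜]

theorem eq_of_eventually_hasSum_mul_pow {a b : ℕ → 𝕜} {f : 𝕜 → 𝕜}
    (ha : ∀ᶠ s in 𝓝 0, HasSum (fun n ↦ a n * s ^ n) (f s))
    (hb : ∀ᶠ s in 𝓝 0, HasSum (fun n ↦ b n * s ^ n) (f s)) : a = b := by
  have hasFPowerSeriesAt {c : ℕ → 𝕜} (hc : ∀ᶠ s in 𝓝 0, HasSum (fun n ↦ c n * s ^ n) (f s)) :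
      HasFPowerSeriesAt f (.ofScalars 𝕜 c) 0 := by
    simpa only [hasFPowerSeriesAt_iff, FormalMultilinearSeries.coeff_ofScalars, smul_eq_mul,
      zero_add, mul_comm] using hc
  have series_eq := (hasFPowerSeriesAt ha).eq_formalMultilinearSeries (hasFPowerSeriesAt hb)
  ext n
  simpa only [FormalMultilinearSeries.coeff_ofScalars] using congrArg (fun p ↦ p.coeff n) series_eq

theorem sum_antidiagonal_mul_choose_mul_pow {R : Type*} [CommSemiring R] (a : ℕ → R) (s t : R)
    (m : ℕ) :
    ∑ p ∈ antidiagonal m, a (p.1 + p.2) * ((p.1 + p.2).choose p.2 * s ^ p.1 * t ^ p.2) =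
      a m * (s + t) ^ m := by
  rw [(Commute.all s t).add_pow', Finset.mul_sum]
  refine Finset.sum_congr rfl fun p hp ↦ ?_
  rw [← mem_antidiagonal.mp hp, Nat.choose_symm_add, nsmul_eq_mul, mul_assoc]

variable [CompleteSpace 𝕜] {a : ℕ → 𝕜} {s t : 𝕜}

theorem summable_prod_mul_choose_mul_pow (ha : Summable fun m ↦ ‖a m‖ * (‖s‖ + ‖t‖) ^ m) :
    Summable fun p : ℕ × ℕ ↦ a (p.1 + p.2) * ((p.1 + p.2).choose p.2 * s ^ p.1 * t ^ p.2) := by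
  let bound (p : ℕ × ℕ) : ℝ :=
    ‖a (p.1 + p.2)‖ * ((p.1 + p.2).choose p.2 * ‖s‖ ^ p.1 * ‖t‖ ^ p.2)
  have summable_bound : Summable bound := by
    rw [← Finset.HasAntidiagonal.sigmaAntidiagonalEquivProd.summable_iff,
      summable_sigma_of_nonneg fun _ ↦ by dsimp [bound]; positivity]
    refine ⟨fun m ↦ (hasSum_fintype _).summable, ha.congr fun m ↦ ?_⟩
    rw [tsum_fintype, ← sum_antidiagonal_mul_choose_mul_pow (fun m ↦ ‖a m‖)]
    exact (Finset.sum_coe_sort (antidiagonal m) bound).symm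
  refine summable_bound.of_norm_bounded fun p ↦ ?_
  have norm_choose_le : ‖((p.1 + p.2).choose p.2 : 𝕜)‖ ≤ (p.1 + p.2).choose p.2 := by
    simpa only [norm_one, mul_one] using Nat.norm_cast_le (α := 𝕜) ((p.1 + p.2).choose p.2)
  simp only [norm_mul, norm_pow, bound]
  gcongr

theorem hasSum_prod_mul_choose_mul_pow (ha : Summable fun m ↦ ‖a m‖ * (‖s‖ + ‖t‖) ^ m) :
    HasSum (fun p : ℕ × ℕ ↦ a (p.1 + p.2) * ((p.1 + p.2).choose p.2 * s ^ p.1 * t ^ p.2))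
      (∑' m, a m * (s + t) ^ m) := by
  let term (p : ℕ × ℕ) : 𝕜 := a (p.1 + p.2) * ((p.1 + p.2).choose p.2 * s ^ p.1 * t ^ p.2)
  have hasSum_term : HasSum term (∑' p, term p) := (summable_prod_mul_choose_mul_pow ha).hasSum
  have sum_by_antidiagonals : HasSum (fun m ↦ a m * (s + t) ^ m) (∑' p, term p) := by
    simp only [← sum_antidiagonal_mul_choose_mul_pow]
    exact (Finset.HasAntidiagonal.sigmaAntidiagonalEquivProd.hasSum_iff.mpr hasSum_term).sigma
      fun m ↦ (antidiagonal m).hasSum term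
  rwa [sum_by_antidiagonals.tsum_eq]

theorem hasSum_choose_mul_pow_of_eventually_hasSum {c : ℕ → 𝕜} {ρ : ℝ} (ht : ‖t‖ < ρ)
    (ha : Summable fun m ↦ ‖a m‖ * ρ ^ m)
    (hc : ∀ᶠ s in 𝓝 0, HasSum (fun n ↦ c n * s ^ n) (∑' m, a m * (s + t) ^ m)) (n : ℕ) :
    HasSum (fun k ↦ ((n + k).choose k * a (n + k) * t ^ k : 𝕜)) (c n) := by
  have summable_of_norm_lt {s : 𝕜} (hs : ‖s‖ < ρ - ‖t‖) :
      Summable fun m ↦ ‖a m‖ * (‖s‖ + ‖t‖) ^ m :=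
    ha.of_nonneg_of_le (fun m ↦ by positivity) fun m ↦ by gcongr; linarith
  have summable_coeff (n : ℕ) : Summable fun k ↦ ((n + k).choose k * a (n + k) * t ^ k : 𝕜) := by
    obtain ⟨s, hs_pos, hs_lt⟩ := NormedField.exists_norm_lt 𝕜 (sub_pos.mpr ht)
    have hs : s ^ n ≠ 0 := pow_ne_zero n (norm_pos_iff.mp hs_pos)
    refine (((summable_prod_mul_choose_mul_pow (summable_of_norm_lt hs_lt)).prod_factor n).mul_right
      (s ^ n)⁻¹).congr fun k ↦ ?_
    field_simp
  have hasSum_coeff : ∀ᶠ s in 𝓝 0, HasSum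
      (fun n ↦ (∑' k, ((n + k).choose k * a (n + k) * t ^ k : 𝕜)) * s ^ n)
      (∑' m, a m * (s + t) ^ m) := by
    filter_upwards [Metric.ball_mem_nhds (0 : 𝕜) (sub_pos.mpr ht)] with s hs
    rw [mem_ball_zero_iff] at hs
    refine (hasSum_prod_mul_choose_mul_pow (summable_of_norm_lt hs)).prod_fiberwise fun n ↦ ?_
    convert! (summable_coeff n).hasSum.mul_right (s ^ n) using 2 with k
    ring
  rw [eq_of_eventually_hasSum_mul_pow hc hasSum_coeff]
  exact (summable_coeff n).hasSum

end PowerSeries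

theorem hasSum_choose_mul_pow_of_norm_lt_one {𝕜 : Type*} [NormedDivisionRing 𝕜] [CompleteSpace 𝕜]
    {t : 𝕜} (ht : ‖t‖ < 1) (j : ℕ) :
    HasSum (fun m ↦ (m.choose j * t ^ m : 𝕜)) (t ^ j / (1 - t) ^ (j + 1)) := by
  rw [← hasSum_nat_add_iff' j, Finset.sum_eq_zero fun m hm ↦ ?_, sub_zero]
  · convert! (hasSum_choose_mul_geometric_of_norm_lt_one j ht).mul_left (t ^ j) using 1
    · ext m
      rw [add_comm m j, pow_add, ← mul_assoc, ← mul_assoc, Nat.cast_comm]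
    · rw [mul_one_div]
  · rw [Nat.choose_eq_zero_of_lt (Finset.mem_range.mp hm), Nat.cast_zero, zero_mul]

theorem hasSum_laguerre (m : ℕ) (x : ℝ) :
    HasSum (fun j ↦ m.choose j * ((-x) ^ j / j !)) (laguerre m x) := by
  have laguerre_eq : laguerre m x = ∑ j ∈ Finset.range (m + 1), m.choose j * ((-x) ^ j / j !) :=
    Finset.sum_congr rfl fun j _ ↦ by rw [neg_pow x]; ring
  rw [laguerre_eq]
  refine hasSum_sum_of_ne_finset_zero fun j hj ↦ ?_
  rw [Nat.choose_eq_zero_of_lt (by simpa using hj), Nat.cast_zero, zero_mul]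

/-- The generating function of the Laguerre polynomials in closed form, equal to `∑ₘ Lₘ(x) tᵐ` for
`|t| < 1`; at the pole `t = 1` it takes the junk value `0`. -/
noncomputable def laguerreGenFun (x t : ℝ) : ℝ :=
  Real.exp (-x * t / (1 - t)) / (1 - t)

theorem laguerreGenFun_add {x t s : ℝ} (ht : t ≠ 1) (hst : s + t ≠ 1) :
    laguerreGenFun x (s + t) =
      laguerreGenFun x t * laguerreGenFun (x / (1 - t)) (s / (1 - t)) := by
  have ht' : 1 - t ≠ 0 := sub_ne_zero.mpr ht.symm
  have hst' : 1 - (s + t) ≠ 0 := sub_ne_zero.mpr hst.symm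
  have one_sub_div : 1 - s / (1 - t) = (1 - (s + t)) / (1 - t) := by field_simp; ring
  have exponent_eq : -x * (s + t) / (1 - (s + t)) = -x * t / (1 - t) +
      -(x / (1 - t)) * (s / (1 - t)) / (1 - s / (1 - t)) := by
    rw [one_sub_div]; field_simp; ring
  rw [laguerreGenFun, exponent_eq, Real.exp_add, laguerreGenFun, laguerreGenFun,
    div_mul_div_comm, one_sub_div, mul_div_cancel₀ _ ht']

theorem hasSum_laguerreGenFun (x t : ℝ) :
    HasSum (fun j ↦ t ^ j / (1 - t) ^ (j + 1) * ((-x) ^ j / j !)) (laguerreGenFun x t) := by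
  have exp_series := NormedSpace.expSeries_div_hasSum_exp (-x * t / (1 - t))
  rw [← Real.exp_eq_exp_ℝ] at exp_series
  rw [laguerreGenFun]
  convert! exp_series.div_const (1 - t) using 2 with j
  rw [div_pow, mul_pow, pow_succ, ← div_div]
  ring

theorem summable_choose_mul_pow_mul_pow_div_factorial {t : ℝ} (ht : |t| < 1) (y : ℝ) :
    Summable fun p : ℕ × ℕ ↦ p.2.choose p.1 * t ^ p.2 * (y ^ p.1 / p.1 !) := by
  refine Summable.of_norm ?_
  have hasSum_fiber (j : ℕ) :=
    (hasSum_choose_mul_pow_of_norm_lt_one (t := |t|) (by simpa) j).mul_right (|y| ^ j / j !)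
  simp only [norm_mul, norm_div, norm_pow, RCLike.norm_natCast, Real.norm_eq_abs]
  rw [summable_prod_of_nonneg fun _ ↦ by dsimp; positivity]
  refine ⟨fun j ↦ (hasSum_fiber j).summable, ?_⟩
  simp only [(hasSum_fiber _).tsum_eq]
  simpa only [neg_neg] using (hasSum_laguerreGenFun (-|y|) |t|).summable

theorem hasSum_laguerre_mul_pow {t : ℝ} (ht : |t| < 1) (x : ℝ) :
    HasSum (fun m ↦ laguerre m x * t ^ m) (laguerreGenFun x t) := by
  have double_series := (summable_choose_mul_pow_mul_pow_div_factorial ht (-x)).hasSum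
  have sum_eq := (double_series.prod_fiberwise fun j ↦
    (hasSum_choose_mul_pow_of_norm_lt_one ht j).mul_right ((-x) ^ j / j !)).unique
      (hasSum_laguerreGenFun x t)
  rw [sum_eq] at double_series
  refine ((Equiv.prodComm ℕ ℕ).hasSum_iff.mpr double_series).prod_fiberwise fun m ↦ ?_
  convert! (hasSum_laguerre m x).mul_right (t ^ m) using 2 with j
  simp [mul_right_comm]

theorem hasSum_choose_mul_laguerre_mul_pow {t : ℝ} (ht : |t| < 1) (x : ℝ) (n : ℕ) :
    HasSum (fun k ↦ (n + k).choose k * laguerre (n + k) x * t ^ k)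
      (laguerreGenFun x t * laguerre n (x / (1 - t)) / (1 - t) ^ n) := by
  obtain ⟨ρ, htρ, hρ⟩ := exists_between ht
  have hρ_abs : |ρ| = ρ := abs_of_pos ((abs_nonneg t).trans_lt htρ)
  have summable_norm : Summable fun m ↦ ‖laguerre m x‖ * ρ ^ m := by
    simpa [hρ_abs] using (hasSum_laguerre_mul_pow (hρ_abs.trans_lt hρ) x).summable.norm
  refine hasSum_choose_mul_pow_of_eventually_hasSum
    (c := fun n ↦ laguerreGenFun x t * laguerre n (x / (1 - t)) / (1 - t) ^ n)
    htρ summable_norm ?_ n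
  have eventually_add : ∀ᶠ s in 𝓝 (0 : ℝ), |s + t| < 1 :=
    ContinuousAt.eventually_lt (by fun_prop) continuousAt_const (by simpa)
  have eventually_div : ∀ᶠ s in 𝓝 (0 : ℝ), |s / (1 - t)| < 1 :=
    ContinuousAt.eventually_lt (by fun_prop) continuousAt_const (by simp)
  filter_upwards [eventually_add, eventually_div] with s hs_add hs_div
  rw [(hasSum_laguerre_mul_pow hs_add x).tsum_eq,
    laguerreGenFun_add (lt_of_abs_lt ht).ne (lt_of_abs_lt hs_add).ne]
  convert! (hasSum_laguerre_mul_pow hs_div (x / (1 - t))).mul_left (laguerreGenFun x t) using 2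
    with n
  rw [div_pow]
  ring

theorem laguerre_series_identity_general (n : ℕ) {lam : ℝ} (hlam0 : lam ≠ 0) (hlam1 : |lam| < 1)
    (z : ℝ) :
    HasSum
      (fun k ↦ (-1 : ℝ) ^ n * lam ^ (n + k) * ((n + k).choose k) * laguerre (n + k) (z / lam))
      ((1 / (1 - lam)) * (-lam / (1 - lam)) ^ n *
        laguerre n (z / (lam * (1 - lam))) * Real.exp (-z / (1 - lam))) := by
  convert! (hasSum_choose_mul_laguerre_mul_pow hlam1 (z / lam) n).mul_left ((-lam) ^ n) using 1
  · ext k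
    rw [neg_pow lam, pow_add]
    ring
  · rw [laguerreGenFun, ← neg_div, div_mul_cancel₀ _ hlam0, div_div, div_pow]
    ring

theorem laguerre_series_identity (n : ℕ) (lam : ℝ) (hlam0 : 0 < lam) (hlam1 : lam < 1)
    (z : ℝ) (hz : 0 ≤ z) :
    Filter.Tendsto
      (fun N : ℕ => ∑ k ∈ Finset.range N,
        (-1 : ℝ) ^ n * lam ^ (n + k) * ((n + k).choose k) * laguerre (n + k) (z / lam))
      Filter.atTop
      (nhds ((1 / (1 - lam)) * (-lam / (1 - lam)) ^ n *
        laguerre n (z / (lam * (1 - lam))) * Real.exp (-z / (1 - lam)))) :=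
  (laguerre_series_identity_general n hlam0.ne' (by rwa [abs_of_pos hlam0]) z).tendsto_sum_nat
end

section
/- (Generating function for the Laguerre polynomials.) For every real x with |x| < 1 and every real z, the series Σ_{k=0}^∞ x^k · (-1)^k · L_k(z) converges and equals (1/(1+x)) · exp(z·x/(1+x)). -/
open Filter Topology

/-! The sequence `n ↦ L n z` is the binomial transform of `j ↦ (-z) ^ j / j!`. Interchanging the two
summations and using `∑ n, C(n, j) * r ^ n = r ^ j / (1 - r) ^ (j + 1)`, the generating function of
a binomial transform is `(1 - r)⁻¹ * A (r / (1 - r))`, where `A` is the generating function of the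
original sequence; for Laguerre polynomials `A t = exp (-z * t)`. -/

open Finset.HasAntidiagonal (antidiagonal)

/-- The binomial transform `n ↦ ∑ j ≤ n, C(n, j) * a j` of a sequence `a`, here without the
alternating signs that some authors include. It acts on generating functions by an Euler
transformation, see `hasSum_pow_mul_binomialTransform`. -/
def binomialTransform {R : Type*} [Semiring R] (a : ℕ → R) (n : ℕ) : R :=
  ∑ j ∈ Finset.range (n + 1), n.choose j * a j

theorem laguerre_eq_binomialTransform (n : ℕ) (z : ℝ) :
    laguerre n z = binomialTransform (fun j ↦ (-z) ^ j / j.factorial) n := by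
  refine Finset.sum_congr rfl fun j _ ↦ ?_
  simp only [neg_pow z]
  ring

theorem sum_antidiagonal_mul_choose_mul_pow_add {R : Type*} [CommSemiring R] (a : ℕ → R) (r : R)
    (n : ℕ) :
    ∑ p ∈ antidiagonal n, a p.1 * (((p.2 + p.1).choose p.1 : R) * r ^ (p.2 + p.1)) =
      r ^ n * binomialTransform a n := by
  rw [Finset.Nat.sum_antidiagonal_eq_sum_range_succ_mk, binomialTransform, Finset.mul_sum]
  refine Finset.sum_congr rfl fun j hj ↦ ?_
  rw [Nat.sub_add_cancel (Finset.mem_range_succ_iff.mp hj)]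
  ring

theorem hasSum_sum_antidiagonal {A M : Type*} [AddCommMonoid A] [Finset.HasAntidiagonal A]
    [AddCommMonoid M] [TopologicalSpace M] [ContinuousAdd M] [RegularSpace M]
    {f : A × A → M} {s : M} (hf : HasSum f s) :
    HasSum (fun n ↦ ∑ p ∈ antidiagonal n, f p) s := by
  have hsigma := Finset.HasAntidiagonal.sigmaAntidiagonalEquivProd.hasSum_iff.mpr hf
  exact hsigma.sigma fun n ↦ (antidiagonal n).hasSum f

theorem hasSum_choose_mul_pow_add {𝕜 : Type*} [NormedField 𝕜] [HasSummableGeomSeries 𝕜]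
    {r : 𝕜} (hr : ‖r‖ < 1) (j : ℕ) :
    HasSum (fun m ↦ ((m + j).choose j : 𝕜) * r ^ (m + j)) ((r / (1 - r)) ^ j / (1 - r)) := by
  convert! (hasSum_choose_mul_geometric_of_norm_lt_one j hr).mul_right (r ^ j) using 1
  · ext m
    ring
  · rw [div_pow, div_div, ← pow_succ, one_div_mul_eq_div]

section EulerTransformation

variable {𝕜 : Type*} [NormedField 𝕜] [CompleteSpace 𝕜] {a : ℕ → 𝕜} {r s : 𝕜}

theorem summable_mul_choose_mul_pow_add (hr : ‖r‖ < 1)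
    (ha : Summable fun j ↦ ‖a j‖ * (‖r‖ / (1 - ‖r‖)) ^ j) :
    Summable fun p : ℕ × ℕ ↦ a p.1 * (((p.2 + p.1).choose p.1 : 𝕜) * r ^ (p.2 + p.1)) := by
  have row (j : ℕ) : HasSum (fun m ↦ ‖a j‖ * (((m + j).choose j : ℝ) * ‖r‖ ^ (m + j)))
      (‖a j‖ * ((‖r‖ / (1 - ‖r‖)) ^ j / (1 - ‖r‖))) :=
    (hasSum_choose_mul_pow_add (r := ‖r‖) (by rwa [norm_norm]) j).mul_left ‖a j‖
  have majorant : Summable fun p : ℕ × ℕ ↦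
      ‖a p.1‖ * (((p.2 + p.1).choose p.1 : ℝ) * ‖r‖ ^ (p.2 + p.1)) := by
    refine (summable_prod_of_nonneg fun p ↦ by positivity).mpr ⟨fun j ↦ (row j).summable, ?_⟩
    simpa only [(row _).tsum_eq, mul_div_assoc] using ha.div_const (1 - ‖r‖)
  refine majorant.of_norm_bounded fun p ↦ ?_
  rw [norm_mul, norm_mul, norm_pow]
  gcongr
  simpa using Nat.norm_cast_le (α := 𝕜) ((p.2 + p.1).choose p.1)

theorem hasSum_mul_choose_mul_pow_add (hr : ‖r‖ < 1)
    (ha : Summable fun j ↦ ‖a j‖ * (‖r‖ / (1 - ‖r‖)) ^ j)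
    (hs : HasSum (fun j ↦ a j * (r / (1 - r)) ^ j) s) :
    HasSum (fun p : ℕ × ℕ ↦ a p.1 * (((p.2 + p.1).choose p.1 : 𝕜) * r ^ (p.2 + p.1)))
      (s / (1 - r)) := by
  have hsum := (summable_mul_choose_mul_pow_add hr ha).hasSum
  have iterated := hsum.prod_fiberwise fun j ↦ (hasSum_choose_mul_pow_add hr j).mul_left (a j)
  simp only [← mul_div_assoc] at iterated
  rwa [iterated.unique (hs.div_const (1 - r))] at hsum

theorem hasSum_pow_mul_binomialTransform (hr : ‖r‖ < 1)
    (ha : Summable fun j ↦ ‖a j‖ * (‖r‖ / (1 - ‖r‖)) ^ j)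
    (hs : HasSum (fun j ↦ a j * (r / (1 - r)) ^ j) s) :
    HasSum (fun n ↦ r ^ n * binomialTransform a n) (s / (1 - r)) := by
  simpa only [sum_antidiagonal_mul_choose_mul_pow_add] using
    hasSum_sum_antidiagonal (hasSum_mul_choose_mul_pow_add hr ha hs)

end EulerTransformation

theorem hasSum_pow_mul_laguerre {r : ℝ} (hr : |r| < 1) (z : ℝ) :
    HasSum (fun n ↦ r ^ n * laguerre n z) (Real.exp (-z * (r / (1 - r))) / (1 - r)) := by
  have habs : Summable fun j : ℕ ↦ ‖(-z) ^ j / j.factorial‖ * (‖r‖ / (1 - ‖r‖)) ^ j := by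
    convert! Real.summable_pow_div_factorial (|z| * (‖r‖ / (1 - ‖r‖))) using 2 with j
    simp only [norm_div, norm_pow, norm_neg, Real.norm_eq_abs, Nat.abs_cast]
    ring
  have hexp : HasSum (fun j : ℕ ↦ (-z) ^ j / j.factorial * (r / (1 - r)) ^ j)
      (Real.exp (-z * (r / (1 - r)))) := by
    rw [Real.exp_eq_exp_ℝ]
    convert! NormedSpace.expSeries_div_hasSum_exp (-z * (r / (1 - r))) using 2 with j
    ring
  simpa only [laguerre_eq_binomialTransform] using hasSum_pow_mul_binomialTransform hr habs hexp

/-- Generating function for the Laguerre polynomials. -/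
theorem laguerre_generating_function (x : ℝ) (hx : |x| < 1) (z : ℝ) :
    Filter.Tendsto
      (fun N : ℕ => ∑ k ∈ Finset.range N, x ^ k * (-1 : ℝ) ^ k * laguerre k z)
      Filter.atTop
      (nhds ((1 / (1 + x)) * Real.exp (z * x / (1 + x)))) := by
  have hsum := hasSum_pow_mul_laguerre (r := -x) (by rwa [abs_neg]) z
  have hvalue : Real.exp (-z * (-x / (1 - -x))) / (1 - -x) =
      1 / (1 + x) * Real.exp (z * x / (1 + x)) := by
    rw [sub_neg_eq_add, ← mul_div_assoc, neg_mul_neg, one_div_mul_eq_div]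
  have hterm (k : ℕ) : (-x) ^ k = x ^ k * (-1) ^ k := by rw [← mul_pow, mul_neg_one]
  simpa only [hvalue, hterm] using hsum.tendsto_sum_nat
end

section
/- For all natural numbers m, n and every real λ, the integral ∫_0^∞ L_m((1-λ)z) · L_n(z) · e^{-z} dz equals C(m,n) · λ^{m-n} · (1-λ)^n if m ≥ n, and equals 0 if m < n, where C(m,n) is the binomial coefficient. -/
open MeasureTheory

/-!
Against the weight `e^{-z}`, the `i`-th moment of `L_n` is `i!` times the alternating sum
`∑_j (-1)^j C(n,j) C(i+j,i)`, an `n`-th finite difference of `x ↦ C(x,i)`, so it equals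
`(-1)^n i! C(i,n)`. Expanding `L_m((1-λ)z)` in powers of `z`, the integral becomes
`(-1)^n ∑_i C(m,i) C(i,n) (λ-1)^i`, which the subset-of-a-subset identity and the binomial theorem
evaluate.
-/

lemma fwdDiff_iter_choose_eq_zero_of_lt {j k : ℕ} (hjk : j < k) :
    (fwdDiff 1)^[k] (fun x ↦ x.choose j : ℕ → ℤ) = 0 := by
  obtain ⟨d, rfl⟩ := Nat.exists_eq_add_of_lt hjk
  have hconst : (fwdDiff 1)^[j] (fun x ↦ x.choose j : ℕ → ℤ) = fun _ ↦ 1 := by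
    simpa using fwdDiff_iter_choose 0 j
  rw [show j + d + 1 = d + 1 + j by ring, Function.iterate_add_apply, hconst,
    Function.iterate_succ_apply, fwdDiff_const]
  ext x
  simp [fwdDiff_iter_eq_sum_shift]

lemma fwdDiff_iter_choose_apply_self (k i : ℕ) :
    (fwdDiff 1)^[k] (fun x ↦ x.choose i : ℕ → ℤ) i = i.choose k := by
  rcases le_or_gt k i with hki | hik
  · obtain ⟨d, rfl⟩ := Nat.exists_eq_add_of_le hki
    rw [fwdDiff_iter_choose, Nat.choose_symm_add]
  · rw [fwdDiff_iter_choose_eq_zero_of_lt hik, Nat.choose_eq_zero_of_lt hik]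
    simp

lemma alternating_sum_range_choose_mul_add_choose (n i : ℕ) :
    ∑ j ∈ Finset.range (n + 1), (-1 : ℤ) ^ j * n.choose j * (i + j).choose i =
      (-1) ^ n * i.choose n := by
  rw [← fwdDiff_iter_choose_apply_self, fwdDiff_iter_eq_sum_shift, Finset.mul_sum]
  refine Finset.sum_congr rfl fun j hj ↦ ?_
  have hsign : (-1 : ℤ) ^ n * (-1) ^ (n - j) = (-1) ^ j := by
    obtain ⟨d, rfl⟩ := Nat.exists_eq_add_of_le (Finset.mem_range_succ_iff.mp hj)
    rw [Nat.add_sub_cancel_left, pow_add, mul_assoc, ← mul_pow]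
    simp
  simp [← hsign, mul_assoc]

lemma sum_range_choose_mul_choose_mul_pow {R : Type*} [CommSemiring R] (m n : ℕ) (x : R) :
    ∑ i ∈ Finset.range (m + 1), (m.choose i : R) * i.choose n * x ^ i =
      m.choose n * x ^ n * (x + 1) ^ (m - n) := by
  have hvanish : ∀ i < n, (m.choose i : R) * i.choose n * x ^ i = 0 := fun i hi ↦ by
    simp [Nat.choose_eq_zero_of_lt hi]
  rcases le_or_gt n m with hnm | hmn
  · obtain ⟨d, rfl⟩ := Nat.exists_eq_add_of_le hnm
    rw [add_assoc, Finset.sum_range_add,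
      Finset.sum_eq_zero fun i hi ↦ hvanish i (Finset.mem_range.mp hi), zero_add,
      Nat.add_sub_cancel_left, add_pow, Finset.mul_sum]
    refine Finset.sum_congr rfl fun r _ ↦ ?_
    have hsubset : (n + d).choose (n + r) * (n + r).choose n = (n + d).choose n * d.choose r := by
      simpa using Nat.choose_mul (n := n + d) (Nat.le_add_right n r)
    rw [← Nat.cast_mul, hsubset, Nat.cast_mul, pow_add, one_pow]
    ring
  · rw [Nat.choose_eq_zero_of_lt hmn, Nat.cast_zero, zero_mul, zero_mul]
    exact Finset.sum_eq_zero fun i hi ↦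
      hvanish i ((Finset.mem_range_succ_iff.mp hi).trans_lt hmn)

lemma integrableOn_pow_mul_exp_neg_Ioi (k : ℕ) :
    IntegrableOn (fun z : ℝ ↦ z ^ k * Real.exp (-z)) (Set.Ioi 0) := by
  simpa [mul_comm] using Real.GammaIntegral_convergent (s := (k : ℝ) + 1) (by positivity)

lemma integrableOn_pow_mul_pow_mul_exp_neg_Ioi (i j : ℕ) :
    IntegrableOn (fun z : ℝ ↦ z ^ i * (z ^ j * Real.exp (-z))) (Set.Ioi 0) := by
  simpa only [pow_add, mul_assoc] using integrableOn_pow_mul_exp_neg_Ioi (i + j)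

lemma integral_pow_mul_exp_neg_Ioi (k : ℕ) :
    ∫ z in Set.Ioi (0 : ℝ), z ^ k * Real.exp (-z) = k.factorial := by
  rw [← Real.Gamma_nat_eq_factorial, Real.Gamma_eq_integral (by positivity)]
  simp [mul_comm]

section Laguerre

lemma laguerre_mul_mul_eq_sum (n : ℕ) (c z w : ℝ) :
    laguerre n (c * z) * w =
      ∑ i ∈ Finset.range (n + 1),
        (-1) ^ i * n.choose i * c ^ i / i.factorial * (z ^ i * w) := by
  rw [laguerre, Finset.sum_mul]
  refine Finset.sum_congr rfl fun i _ ↦ ?_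
  ring

variable {μ : Measure ℝ} {f : ℝ → ℝ} {n : ℕ}

lemma integrable_laguerre_mul_mul (hf : ∀ i ≤ n, Integrable (fun z ↦ z ^ i * f z) μ) (c : ℝ) :
    Integrable (fun z ↦ laguerre n (c * z) * f z) μ := by
  simp only [laguerre_mul_mul_eq_sum]
  exact integrable_finsetSum _ fun i hi ↦
    (hf i (Finset.mem_range_succ_iff.mp hi)).const_mul _

lemma integral_laguerre_mul_mul (hf : ∀ i ≤ n, Integrable (fun z ↦ z ^ i * f z) μ) (c : ℝ) :
    ∫ z, laguerre n (c * z) * f z ∂μ =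
      ∑ i ∈ Finset.range (n + 1),
        (-1) ^ i * n.choose i * c ^ i / i.factorial * ∫ z, z ^ i * f z ∂μ := by
  simp only [laguerre_mul_mul_eq_sum]
  rw [integral_finsetSum _ fun i hi ↦ (hf i (Finset.mem_range_succ_iff.mp hi)).const_mul _]
  simp only [integral_const_mul]

lemma integrableOn_pow_mul_laguerre_mul_exp_neg_Ioi (i n : ℕ) :
    IntegrableOn (fun z ↦ z ^ i * (laguerre n z * Real.exp (-z))) (Set.Ioi 0) := by
  simpa only [IntegrableOn, one_mul, mul_left_comm] using
    integrable_laguerre_mul_mul (n := n)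
      (fun j _ ↦ integrableOn_pow_mul_pow_mul_exp_neg_Ioi j i) 1

lemma integral_pow_mul_laguerre_mul_exp_neg_Ioi (i n : ℕ) :
    ∫ z in Set.Ioi (0 : ℝ), z ^ i * (laguerre n z * Real.exp (-z)) =
      (-1) ^ n * i.factorial * i.choose n := by
  calc ∫ z in Set.Ioi (0 : ℝ), z ^ i * (laguerre n z * Real.exp (-z))
    _ = ∑ j ∈ Finset.range (n + 1), (-1 : ℝ) ^ j * n.choose j / j.factorial *
          ∫ z in Set.Ioi (0 : ℝ), z ^ j * (z ^ i * Real.exp (-z)) := by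
        simpa only [one_mul, one_pow, mul_one, mul_left_comm] using
          integral_laguerre_mul_mul (n := n)
            (fun j _ ↦ integrableOn_pow_mul_pow_mul_exp_neg_Ioi j i) 1
    _ = ∑ j ∈ Finset.range (n + 1),
          (-1 : ℝ) ^ j * n.choose j / j.factorial * (i + j).factorial := by
        simp only [← mul_assoc, ← pow_add, integral_pow_mul_exp_neg_Ioi, add_comm]
    _ = i.factorial *
          ∑ j ∈ Finset.range (n + 1), (-1 : ℝ) ^ j * n.choose j * (i + j).choose i := by
        rw [Finset.mul_sum]
        refine Finset.sum_congr rfl fun j _ ↦ ?_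
        rw [← Nat.add_choose_mul_factorial_mul_factorial i j, Nat.choose_symm_add]
        push_cast
        field_simp
    _ = i.factorial * ((-1) ^ n * i.choose n) := by
        congr 1
        exact_mod_cast alternating_sum_range_choose_mul_add_choose n i
    _ = (-1) ^ n * i.factorial * i.choose n := by ring

end Laguerre

theorem laguerre_scaled_orthogonality (m n : ℕ) (lam : ℝ) :
    ∫ z in Set.Ioi (0 : ℝ), laguerre m ((1 - lam) * z) * laguerre n z * Real.exp (-z) =
      if n ≤ m then (m.choose n : ℝ) * lam ^ (m - n) * (1 - lam) ^ n else 0 := by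
  calc ∫ z in Set.Ioi (0 : ℝ), laguerre m ((1 - lam) * z) * laguerre n z * Real.exp (-z)
    _ = ∑ i ∈ Finset.range (m + 1), (-1) ^ i * m.choose i * (1 - lam) ^ i / i.factorial *
          ((-1) ^ n * i.factorial * i.choose n) := by
        simp only [mul_assoc (laguerre m _), ← integral_pow_mul_laguerre_mul_exp_neg_Ioi]
        exact integral_laguerre_mul_mul
          (fun i _ ↦ integrableOn_pow_mul_laguerre_mul_exp_neg_Ioi i n) (1 - lam)
    _ = (-1) ^ n * ∑ i ∈ Finset.range (m + 1), m.choose i * i.choose n * (-(1 - lam)) ^ i := by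
        rw [Finset.mul_sum]
        refine Finset.sum_congr rfl fun i _ ↦ ?_
        rw [neg_pow (1 - lam)]
        field_simp
    _ = m.choose n * lam ^ (m - n) * (1 - lam) ^ n := by
        have hsign : (-1 : ℝ) ^ n * (-(1 - lam)) ^ n = (1 - lam) ^ n := by
          rw [← mul_pow, neg_one_mul, neg_neg]
        rw [sum_range_choose_mul_choose_mul_pow, ← hsign, show -(1 - lam) + 1 = lam by ring]
        ring
    _ = if n ≤ m then m.choose n * lam ^ (m - n) * (1 - lam) ^ n else 0 := by
        split_ifs with hnm
        · rfl
        · simp [Nat.choose_eq_zero_of_lt (not_le.mp hnm)]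
end

section
/- For every natural number n and every real p with p > -1 such that p is not an integer in {0, 1, ..., n-1}, the integral ∫_0^∞ z^p · L_n(z) · e^{-z} dz equals (-1)^n · Γ(p+1)^2 / (n! · Γ(p-n+1)), where Γ denotes the Gamma function. -/
open MeasureTheory

/-!
Integrating term by term, the integral is `∑ j ≤ n, (-1)^j C(n,j) Γ(p+j+1) / j!`. Since
`Γ(p+j+1) / j! = Γ(p+1) C(p+j,j)` and `(-1)^j C(p+j,j) = C(-(p+1),j)`, the Chu–Vandermonde identity
sums it to `Γ(p+1) C(n-p-1,n) = (-1)^n Γ(p+1) C(p,n)`. Finally `C(p,n) = Γ(p+1) / (n! Γ(p-n+1))`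
when `p - n + 1` is not a pole of `Γ`.
-/

section BinomialRing

variable {R : Type*} [Ring R] [BinomialRing R]

theorem succ_nsmul_ringChoose_succ (r : R) (n : ℕ) :
    (n + 1) • Ring.choose r (n + 1) = Ring.choose r n * (r - n) := by
  simpa [Ring.choose_one_right] using Ring.choose_smul_choose r n.le_succ

theorem ringChoose_neg_add_one (r : R) (n : ℕ) :
    Ring.choose (-(r + 1)) n = (-1) ^ n * Ring.choose (r + n) n := by
  rw [Ring.choose_neg, show r + 1 + n - 1 = r + n by abel]
  simp [Units.smul_def, zsmul_eq_mul]

theorem sum_neg_one_pow_mul_choose_mul_ringChoose_add (r : R) (n : ℕ) :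
    ∑ j ∈ Finset.range (n + 1), (-1) ^ j * (n.choose j) * Ring.choose (r + j) j =
      (-1) ^ n * Ring.choose r n := by
  calc
    _ = ∑ j ∈ Finset.range (n + 1), Ring.choose (-(r + 1)) j * Ring.choose (n : R) (n - j) := by
      refine Finset.sum_congr rfl fun j hj ↦ ?_
      rw [ringChoose_neg_add_one, Ring.choose_natCast,
        Nat.choose_symm (Finset.mem_range_succ_iff.mp hj), mul_assoc, mul_assoc, Nat.cast_comm]
    _ = Ring.choose (-(r + 1) + n) n := by
      rw [Ring.add_choose_eq n (Nat.cast_commute n _).symm,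
        Finset.Nat.sum_antidiagonal_eq_sum_range_succ fun i j ↦
          Ring.choose (-(r + 1)) i * Ring.choose (n : R) j]
    _ = Ring.choose (-((r - n) + 1)) n := by congr 1; abel
    _ = (-1) ^ n * Ring.choose r n := by rw [ringChoose_neg_add_one, sub_add_cancel]

end BinomialRing

theorem gamma_add_one_eq_factorial_mul_ringChoose_mul_gamma {s : ℝ} {n : ℕ}
    (hs : ∀ j : ℕ, j < n → s ≠ j) :
    Real.Gamma (s + 1) = n.factorial * Ring.choose s n * Real.Gamma (s - n + 1) := by
  induction n with
  | zero => simp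
  | succ n ih =>
    have choose_succ : ((n : ℝ) + 1) * Ring.choose s (n + 1) = Ring.choose s n * (s - n) := by
      simpa using succ_nsmul_ringChoose_succ s n
    have gamma_succ : Real.Gamma (s - n + 1) = (s - n) * Real.Gamma (s - n) :=
      Real.Gamma_add_one (sub_ne_zero.mpr (hs n n.lt_succ_self))
    rw [ih fun j hj ↦ hs j (hj.trans n.lt_succ_self), gamma_succ, Nat.factorial_succ]
    push_cast
    rw [show s - (n + 1) + 1 = s - n by ring]
    linear_combination (-(n.factorial : ℝ) * Real.Gamma (s - n)) * choose_succ

theorem ringChoose_eq_gamma_div {s : ℝ} {n : ℕ} (hs : ∀ j : ℕ, j < n → s ≠ j)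
    (gamma_ne_zero : Real.Gamma (s + 1) ≠ 0) :
    Ring.choose s n = Real.Gamma (s + 1) / (n.factorial * Real.Gamma (s - n + 1)) := by
  have gamma_eq := gamma_add_one_eq_factorial_mul_ringChoose_mul_gamma hs
  have gamma_sub_ne_zero : Real.Gamma (s - n + 1) ≠ 0 :=
    right_ne_zero_of_mul (gamma_eq ▸ gamma_ne_zero)
  rw [gamma_eq]
  field_simp

theorem gamma_add_natCast_add_one_of_neg_one_lt {p : ℝ} (hp : -1 < p) (j : ℕ) :
    Real.Gamma (p + j + 1) = j.factorial * Ring.choose (p + j) j * Real.Gamma (p + 1) := by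
  have ne_natCast (i : ℕ) (hi : i < j) : p + j ≠ i := by
    have : (i : ℝ) + 1 ≤ j := by exact_mod_cast hi
    linarith
  rw [gamma_add_one_eq_factorial_mul_ringChoose_mul_gamma ne_natCast, add_sub_cancel_right]

theorem integral_rpow_mul_laguerre_eq_sum_gamma (n : ℕ) {p : ℝ} (hp : -1 < p) :
    ∫ z in Set.Ioi (0 : ℝ), z ^ p * laguerre n z * Real.exp (-z) =
      ∑ j ∈ Finset.range (n + 1),
        (-1 : ℝ) ^ j * (n.choose j) / j.factorial * Real.Gamma (p + j + 1) := by
  have exponent_pos (j : ℕ) : 0 < p + j + 1 := by linarith [j.cast_nonneg (α := ℝ)]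
  calc
    _ = ∫ z in Set.Ioi (0 : ℝ), ∑ j ∈ Finset.range (n + 1),
          (-1 : ℝ) ^ j * (n.choose j) / j.factorial *
            (Real.exp (-z) * z ^ (p + j + 1 - 1)) := by
      refine setIntegral_congr_fun measurableSet_Ioi fun z hz ↦ ?_
      simp only [laguerre, Finset.mul_sum, Finset.sum_mul]
      refine Finset.sum_congr rfl fun j _ ↦ ?_
      rw [add_sub_cancel_right, Real.rpow_add hz, Real.rpow_natCast]
      ring
    _ = _ := by
      rw [integral_finsetSum _ fun j _ ↦
        (Real.GammaIntegral_convergent (exponent_pos j)).const_mul _]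
      simp only [integral_const_mul, Real.Gamma_eq_integral (exponent_pos _)]

theorem rpow_laguerre_integral_general (n : ℕ) {p : ℝ} (hp : -1 < p) :
    ∫ z in Set.Ioi (0 : ℝ), z ^ p * laguerre n z * Real.exp (-z) =
      (-1 : ℝ) ^ n * Real.Gamma (p + 1) * Ring.choose p n := by
  rw [integral_rpow_mul_laguerre_eq_sum_gamma n hp, mul_right_comm,
    ← sum_neg_one_pow_mul_choose_mul_ringChoose_add, Finset.sum_mul]
  refine Finset.sum_congr rfl fun j _ ↦ ?_
  rw [gamma_add_natCast_add_one_of_neg_one_lt hp]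
  field_simp

theorem rpow_laguerre_integral (n : ℕ) (p : ℝ) (hp : p > -1)
    (hp' : ∀ j : ℕ, j < n → p ≠ (j : ℝ)) :
    ∫ z in Set.Ioi (0 : ℝ), z ^ p * laguerre n z * Real.exp (-z) =
      (-1 : ℝ) ^ n * (Real.Gamma (p + 1)) ^ 2 /
        ((n.factorial : ℝ) * Real.Gamma (p - n + 1)) := by
  rw [rpow_laguerre_integral_general n hp,
    ringChoose_eq_gamma_div hp' (Real.Gamma_pos_of_pos (by linarith)).ne']
  ring
end

section
/- (Common phase-space integral of the idempotents of the normal quantization.) Let m, ω, ħ be positive reals and let H(q,p) = p²/(2m) + (mω²/2)·q². Then for every natural number n, the double integral over the (q,p)-plane ∬_{ℝ²} e^{-H(q,p)/(ħω)} · (H(q,p)/(ħω))^n / n! dq dp equals 2πħ. -/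
open MeasureTheory

/-!
In the scaled variables `x = q √(mω / 2ħ)`, `y = p / √(2mħω)` the energy `H / (ħω)` becomes
`x² + y²`, and `dq dp = 2ħ dx dy`. In polar coordinates with `u = r²`, the measure `dx dy` pushes
forward to `π du` on `(0, ∞)`. Hence the phase-space integral of any function `g (H / (ħω))` is
`2πħ ∫₀^∞ g(u) du`, and Euler's integral normalizes `g(u) = e^{-u} uⁿ / n!`.
-/

section ChangeOfVariables

variable {F : Type*} [NormedAddCommGroup F] [NormedSpace ℝ F]

lemma integral_comp_linearMap_addHaar {E : Type*} [NormedAddCommGroup E] [NormedSpace ℝ E]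
    [MeasurableSpace E] [BorelSpace E] [FiniteDimensional ℝ E] (μ : Measure E)
    [μ.IsAddHaarMeasure] (f : E → F) {L : E →ₗ[ℝ] E} (hL : LinearMap.det L ≠ 0) :
    ∫ x, f (L x) ∂μ = |(LinearMap.det L)⁻¹| • ∫ x, f x ∂μ := by
  have hL_embedding : MeasurableEmbedding L :=
    (L.equivOfDetNeZero hL).toContinuousLinearEquiv.toHomeomorph.measurableEmbedding
  rw [← hL_embedding.integral_map, Measure.map_linearMap_addHaar_eq_smul_addHaar μ hL,
    integral_smul_measure, ENNReal.toReal_ofReal (abs_nonneg _)]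

lemma integral_comp_mul_prodMk_mul (f : ℝ × ℝ → F) {a b : ℝ} (ha : a ≠ 0) (hb : b ≠ 0) :
    ∫ z : ℝ × ℝ, f (a * z.1, b * z.2) = |(a * b)⁻¹| • ∫ z, f z := by
  let L : ℝ × ℝ →ₗ[ℝ] ℝ × ℝ := (LinearMap.mulLeft ℝ a).prodMap (LinearMap.mulLeft ℝ b)
  have hL_det : LinearMap.det L = a * b := by simp [L, LinearMap.det_prodMap]
  simpa [hL_det, L] using
    integral_comp_linearMap_addHaar volume f (L := L) (hL_det ▸ mul_ne_zero ha hb)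

lemma integral_comp_norm_sq_complex (g : ℝ → F) :
    ∫ z : ℂ, g (‖z‖ ^ 2) = Real.pi • ∫ u in Set.Ioi 0, g u := by
  have hball : volume.real (Metric.ball (0 : ℂ) 1) = Real.pi := by
    simp [Measure.real, Complex.volume_ball]
  calc ∫ z : ℂ, g (‖z‖ ^ 2)
      = (2 : ℝ) • Real.pi • ∫ r in Set.Ioi (0 : ℝ), r • g (r ^ 2) := by
        simpa [hball, ofNat_smul_eq_nsmul] using
          integral_fun_norm_addHaar (volume : Measure ℂ) fun r ↦ g (r ^ 2)
    _ = Real.pi • ∫ r in Set.Ioi (0 : ℝ), (2 * r) • g (r ^ 2) := by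
        simp only [mul_smul, integral_smul, smul_comm (2 : ℝ) Real.pi]
    _ = Real.pi • ∫ u in Set.Ioi 0, g u := by
        rw [← integral_comp_rpow_Ioi_of_pos (g := g) two_pos]
        norm_num

lemma integral_comp_sq_add_sq (g : ℝ → F) :
    ∫ z : ℝ × ℝ, g (z.1 ^ 2 + z.2 ^ 2) = Real.pi • ∫ u in Set.Ioi 0, g u := by
  rw [← integral_comp_norm_sq_complex, ← Complex.volume_preserving_equiv_real_prod.integral_comp
    Complex.measurableEquivRealProd.measurableEmbedding]
  simp only [Complex.measurableEquivRealProd_apply, Complex.sq_norm, Complex.normSq_apply, ← sq]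

lemma integral_comp_mul_sq_add_mul_sq (g : ℝ → F) {a b : ℝ} (ha : 0 < a) (hb : 0 < b) :
    ∫ z : ℝ × ℝ, g (a * z.1 ^ 2 + b * z.2 ^ 2) =
      (Real.pi / √(a * b)) • ∫ u in Set.Ioi 0, g u := by
  calc ∫ z : ℝ × ℝ, g (a * z.1 ^ 2 + b * z.2 ^ 2)
      = ∫ z : ℝ × ℝ, g ((√a * z.1) ^ 2 + (√b * z.2) ^ 2) := by
        simp only [mul_pow, Real.sq_sqrt, ha.le, hb.le]
    _ = |(√a * √b)⁻¹| • ∫ z : ℝ × ℝ, g (z.1 ^ 2 + z.2 ^ 2) :=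
        integral_comp_mul_prodMk_mul (fun z ↦ g (z.1 ^ 2 + z.2 ^ 2))
          (Real.sqrt_ne_zero'.2 ha) (Real.sqrt_ne_zero'.2 hb)
    _ = (Real.pi / √(a * b)) • ∫ u in Set.Ioi 0, g u := by
        rw [integral_comp_sq_add_sq, smul_smul, ← Real.sqrt_mul ha.le,
          abs_of_nonneg (by positivity), inv_mul_eq_div]

lemma integral_comp_oscillator_energy (g : ℝ → F) {m ω hbar : ℝ} (hm : 0 < m) (hω : 0 < ω)
    (hhbar : 0 < hbar) :
    ∫ qp : ℝ × ℝ, g ((qp.2 ^ 2 / (2 * m) + m * ω ^ 2 / 2 * qp.1 ^ 2) / (hbar * ω)) =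
      (2 * Real.pi * hbar) • ∫ u in Set.Ioi 0, g u := by
  have henergy (q p : ℝ) : (p ^ 2 / (2 * m) + m * ω ^ 2 / 2 * q ^ 2) / (hbar * ω) =
      m * ω / (2 * hbar) * q ^ 2 + 1 / (2 * m * hbar * ω) * p ^ 2 := by
    field_simp
    ring
  have hsqrt : √(m * ω / (2 * hbar) * (1 / (2 * m * hbar * ω))) = 1 / (2 * hbar) := by
    rw [Real.sqrt_eq_iff_mul_self_eq (by positivity) (by positivity)]
    field_simp
  simp only [henergy]
  rw [integral_comp_mul_sq_add_mul_sq g (by positivity) (by positivity), hsqrt]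
  congr 1
  field_simp

end ChangeOfVariables

theorem normal_idempotent_phase_space_integral_general
    (m ω hbar : ℝ) (hm : 0 < m) (hω : 0 < ω) (hhbar : 0 < hbar)
    (H : ℝ → ℝ → ℝ)
    (hH : ∀ q p : ℝ, H q p = p ^ 2 / (2 * m) + m * ω ^ 2 / 2 * q ^ 2) (s : ℝ) (hs : -1 < s) :
    ∫ qp : ℝ × ℝ,
        Real.exp (-(H qp.1 qp.2) / (hbar * ω)) * (H qp.1 qp.2 / (hbar * ω)) ^ s /
          Real.Gamma (s + 1) =
      2 * Real.pi * hbar := by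
  have hs' : 0 < s + 1 := by linarith
  have hEuler : ∫ u in Set.Ioi 0, Real.exp (-u) * u ^ s = Real.Gamma (s + 1) := by
    rw [Real.Gamma_eq_integral hs', add_sub_cancel_right]
  simp only [hH, neg_div]
  rw [integral_div, integral_comp_oscillator_energy (fun u ↦ Real.exp (-u) * u ^ s) hm hω hhbar,
    hEuler, smul_eq_mul, mul_div_cancel_right₀ _ (Real.Gamma_pos_of_pos hs').ne']

/-- The idempotents of the normal-form quantization of the simple harmonic oscillator
all have phase-space integral `2πħ`. -/
theorem normal_idempotent_phase_space_integral
    (m ω hbar : ℝ) (hm : 0 < m) (hω : 0 < ω) (hhbar : 0 < hbar)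
    (H : ℝ → ℝ → ℝ)
    (hH : ∀ q p : ℝ, H q p = p ^ 2 / (2 * m) + m * ω ^ 2 / 2 * q ^ 2) (n : ℕ) :
    ∫ qp : ℝ × ℝ,
        Real.exp (-(H qp.1 qp.2) / (hbar * ω)) * (H qp.1 qp.2 / (hbar * ω)) ^ n /
          (n.factorial : ℝ) =
      2 * Real.pi * hbar := by
  simpa only [Real.rpow_natCast, Real.Gamma_nat_eq_factorial] using
    normal_idempotent_phase_space_integral_general m ω hbar hm hω hhbar H hH n
      (neg_one_lt_zero.trans_le n.cast_nonneg)
end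

section
/- (The selection principle singles out the Groenewold–Moyal form.) Let λ be a real number with 0 < λ ≤ 1/2. If for every natural number k the inequality k·λ·(1-λ) < (k+1)·λ² holds (i.e., for every basic observable distribution the quantum variance is strictly less than the distribution variance), then λ = 1/2. -/
theorem forall_nsmul_lt_iff_nonpos {M : Type*} [AddCommMonoid M] [LinearOrder M]
    [IsOrderedAddMonoid M] [Archimedean M] {a b : M} (hb : 0 < b) :
    (∀ k : ℕ, k • a < b) ↔ a ≤ 0 := by
  refine ⟨fun h => ?_, fun ha k => (nsmul_nonpos ha k).trans_lt hb⟩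
  by_contra! ha
  obtain ⟨k, hk⟩ := Archimedean.arch b ha
  exact (h k).not_ge hk

theorem quantum_variance_lt_variance_iff {R : Type*} [CommRing R] [LinearOrder R]
    [IsStrictOrderedRing R] {lam : R} (hlam : 0 < lam) (x : R) :
    x * lam * (1 - lam) < (x + 1) * lam ^ 2 ↔ x * (1 - 2 * lam) < lam := by
  have variance_gap : (x + 1) * lam ^ 2 - x * lam * (1 - lam) =
      lam * (lam - x * (1 - 2 * lam)) := by ring
  rw [← sub_pos, variance_gap, mul_pos_iff_of_pos_left hlam, sub_pos]

theorem selection_principle_groenewold_moyal_general {K : Type*} [Field K] [LinearOrder K]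
    [IsStrictOrderedRing K] [Archimedean K] {lam : K} (hlam : 0 < lam) :
    (∀ k : ℕ, (k : K) * lam * (1 - lam) < ((k : K) + 1) * lam ^ 2) ↔ 1 / 2 ≤ lam := by
  simp_rw [quantum_variance_lt_variance_iff hlam, ← nsmul_eq_mul]
  rw [forall_nsmul_lt_iff_nonpos hlam, sub_nonpos, div_le_iff₀' two_pos]

/-- The selection principle (quantization must decrease uncertainty) singles out
the Groenewold–Moyal form `λ = 1/2`. -/
theorem selection_principle_groenewold_moyal (lam : ℝ) (hlam0 : 0 < lam)
    (hlam1 : lam ≤ 1 / 2)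
    (h : ∀ k : ℕ, (k : ℝ) * lam * (1 - lam) < ((k : ℝ) + 1) * lam ^ 2) :
    lam = 1 / 2 :=
  le_antisymm hlam1 ((selection_principle_groenewold_moyal_general hlam0).1 h)
end

section
/- (The obstruction cochain of a 2-cocycle is a 3-cocycle.) Let A be an associative algebra over a commutative ring and let C : A × A → A be a bilinear map satisfying the Hochschild 2-cocycle condition a·C(b,c) - C(ab,c) + C(a,bc) - C(a,b)·c = 0 for all a,b,c ∈ A. Define G(a,b,c) = C(C(a,b), c) - C(a, C(b,c)). Then G satisfies the Hochschild 3-cocycle condition: a·G(b,c,d) - G(ab,c,d) + G(a,bc,d) - G(a,b,cd) + G(a,b,c)·d = 0 for all a,b,c,d ∈ A. -/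
/-!
For an arbitrary biadditive `C`, the coboundary of the obstruction cochain is a signed sum of five
terms, obtained by inserting `C` into `δC` in each of its three arguments and by inserting `δC` into
either argument of `C`. When `δC = 0` all five vanish.
-/

section Hochschild

variable {A : Type*} [NonUnitalNonAssocRing A]

/-- The Hochschild coboundary `δC` of a 2-cochain `C`. Biadditive maps are taken as 2-cochains, so
that bilinear maps over any base ring are covered. -/
def hochschildCoboundary₂ (C : A →+ A →+ A) (a b c : A) : A :=
  a * C b c - C (a * b) c + C a (b * c) - C a b * c

/-- The Hochschild coboundary `δG` of a 3-cochain `G`, with `G` encoded as an unbundled function. -/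
def hochschildCoboundary₃ (G : A → A → A → A) (a b c d : A) : A :=
  a * G b c d - G (a * b) c d + G a (b * c) d - G a b (c * d) + G a b c * d

/-- The obstruction to extending a first-order deformation with 2-cocycle `C` to second order: the
associator of the product `C`. -/
def obstructionCochain (C : A →+ A →+ A) (a b c : A) : A :=
  C (C a b) c - C a (C b c)

theorem hochschildCoboundary₃_obstructionCochain (C : A →+ A →+ A) (a b c d : A) :
    hochschildCoboundary₃ (obstructionCochain C) a b c d =
      hochschildCoboundary₂ C a (C b c) d - hochschildCoboundary₂ C a b (C c d)
        - hochschildCoboundary₂ C (C a b) c d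
        + C (hochschildCoboundary₂ C a b c) d + C a (hochschildCoboundary₂ C b c d) := by
  simp only [hochschildCoboundary₃, hochschildCoboundary₂, obstructionCochain, mul_sub, sub_mul,
    map_add, map_sub, AddMonoidHom.add_apply, AddMonoidHom.sub_apply]
  abel

theorem obstruction_is_three_cocycle_general (C : A →+ A →+ A)
    (hC : ∀ a b c : A, hochschildCoboundary₂ C a b c = 0) (a b c d : A) :
    hochschildCoboundary₃ (obstructionCochain C) a b c d = 0 := by
  simp only [hochschildCoboundary₃_obstructionCochain, hC, map_zero, AddMonoidHom.zero_apply,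
    sub_zero, add_zero]

end Hochschild

/-- The obstruction cochain `G(a,b,c) = C(C(a,b),c) - C(a,C(b,c))` of a Hochschild
2-cocycle `C` is a Hochschild 3-cocycle. -/
theorem obstruction_is_three_cocycle
    (R : Type*) [CommRing R] (A : Type*) [Ring A] [Algebra R A]
    (C : A →ₗ[R] A →ₗ[R] A)
    (hC : ∀ a b c : A, a * C b c - C (a * b) c + C a (b * c) - C a b * c = 0) :
    ∀ a b c d : A,
      a * (C (C b c) d - C b (C c d))
        - (C (C (a * b) c) d - C (a * b) (C c d))
        + (C (C a (b * c)) d - C a (C (b * c) d))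
        - (C (C a b) (c * d) - C a (C b (c * d)))
        + (C (C a b) c - C a (C b c)) * d = 0 :=
  obstruction_is_three_cocycle_general (LinearMap.toAddMonoidHom'.comp C.toAddMonoidHom) hC
end
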